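/- Let R[X^{±1}] be the Laurent polynomial ring over R, ŝ the R-algebra involution determined by X ↦ X⁻¹, p̂ the R-algebra endomorphism determined by X ↦ q⁻¹·X, and T̂ the R-linear endomorphism T̂(f) = τ·ŝ(f) + (τ − τ⁻¹)·g, where g is the unique Laurent polynomial with (X² − 1)·g = ŝ(f) − f (for every Laurent polynomial f, ŝ(f) − f is divisible by X² − 1). Then there is a unique homomorphism of R-algebras Φ : H^{ell} → End_R(R[X^{±1}]) with Φ(X) = (multiplication by X), Φ(T) = T̂, and Φ(Y) = ŝ ∘ p̂ ∘ T̂, and Φ is injective (the faithful polynomial representation of the double affine Hecke algebra of type A₁). -/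

import Mathlib

/-!
*Existence.* Each defining relation is checked on operators. Those involving `X` and `T` alone,
namely the quadratic relation (`IsDL.sq`) and `T X T = X⁻¹` (`IsDL.TXT`), are identities of Laurent
polynomials that hold after multiplication by `(X² - 1)²`, which may be cancelled. The other ones
follow because `π = Y T⁻¹` acts as `ŝ p̂`, an involution sending `X` to `q⁻¹ X⁻¹`. Uniqueness holds
because `X`, `T`, `Y` and the inverses of `X` and `Y` generate the algebra.

*Faithfulness.* In the algebra, `T` and `π` can be moved to the right of powers of `X`, and
left multiplication by `π` permutes the elements `Y ^ k`, `T Y ^ k` (`k ∈ ℤ`). Hence every element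
is a combination `∑ fᵢ(X) wᵢ` with Laurent polynomials `fᵢ` and `wᵢ` running over `Y ^ k` and
`T Y ^ k` (`daha_span`). On the other hand `T̂^{±1} = (α ŝ + β) / (X² - 1)` with `α ≠ 0`, so the
operator of `wᵢ` is, up to denominators, a nonzero multiple of the automorphism
`σᵢ : X ↦ q ^ k X^{±1}` plus a combination of automorphisms of smaller length in the infinite
dihedral group generated by `ŝ` and `ŝ p̂` (`wordLeads`). As `q` is not a root of unity, the `σᵢ`
are distinct, so they are linearly independent over the Laurent polynomials by Dedekind's lemma. By
triangularity the operators of the `wᵢ` are independent as well (`eq_zero_of_hasLeading`), so only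
the zero combination acts by zero.
-/

open FreeAlgebra

/-- The coefficient ring `R = ℂ[τ^{±1}, q^{±1}]`, realized as Laurent polynomials in
`q` with coefficients Laurent polynomials in `τ`. -/
abbrev DahaR : Type := LaurentPolynomial (LaurentPolynomial ℂ)

/-- The parameter `τ ∈ R`. -/
noncomputable def dahaTau : DahaR := LaurentPolynomial.C (LaurentPolynomial.T 1)

/-- The parameter `τ⁻¹ ∈ R`. -/
noncomputable def dahaTauInv : DahaR := LaurentPolynomial.C (LaurentPolynomial.T (-1))

/-- The parameter `q ∈ R`. -/
noncomputable def dahaQ : DahaR := LaurentPolynomial.T 1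

/-- The parameter `q⁻¹ ∈ R`. -/
noncomputable def dahaQInv : DahaR := LaurentPolynomial.T (-1)

/-- The defining relations of the double affine Hecke algebra of type `A₁` on the
free `R`-algebra with generators `X = ι 0`, `X⁻¹ = ι 1`, `Y = ι 2`, `Y⁻¹ = ι 3`,
`T = ι 4`. -/
inductive DahaRel : FreeAlgebra DahaR (Fin 5) → FreeAlgebra DahaR (Fin 5) → Prop
  | X_Xinv : DahaRel (ι DahaR (0 : Fin 5) * ι DahaR (1 : Fin 5)) 1
  | Xinv_X : DahaRel (ι DahaR (1 : Fin 5) * ι DahaR (0 : Fin 5)) 1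
  | Y_Yinv : DahaRel (ι DahaR (2 : Fin 5) * ι DahaR (3 : Fin 5)) 1
  | Yinv_Y : DahaRel (ι DahaR (3 : Fin 5) * ι DahaR (2 : Fin 5)) 1
  | hecke : DahaRel
      ((ι DahaR (4 : Fin 5) - algebraMap DahaR (FreeAlgebra DahaR (Fin 5)) dahaTau) *
        (ι DahaR (4 : Fin 5) + algebraMap DahaR (FreeAlgebra DahaR (Fin 5)) dahaTauInv)) 0
  | TXT : DahaRel (ι DahaR (4 : Fin 5) * ι DahaR (0 : Fin 5) * ι DahaR (4 : Fin 5))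
      (ι DahaR (1 : Fin 5))
  | TYinvT : DahaRel (ι DahaR (4 : Fin 5) * ι DahaR (3 : Fin 5) * ι DahaR (4 : Fin 5))
      (ι DahaR (2 : Fin 5))
  | cross : DahaRel
      (ι DahaR (3 : Fin 5) * ι DahaR (1 : Fin 5) * ι DahaR (2 : Fin 5) *
        ι DahaR (0 : Fin 5) * ι DahaR (4 : Fin 5) * ι DahaR (4 : Fin 5))
      (algebraMap DahaR (FreeAlgebra DahaR (Fin 5)) dahaQ)

/-- The double affine Hecke algebra `H^{ell}` of type `A₁`. -/
abbrev Daha := RingQuot DahaRel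

/-- Generators of `H^{ell}`. -/
noncomputable def Daha.X : Daha := RingQuot.mkAlgHom DahaR DahaRel (ι DahaR (0 : Fin 5))
noncomputable def Daha.Y : Daha := RingQuot.mkAlgHom DahaR DahaRel (ι DahaR (2 : Fin 5))
noncomputable def Daha.T : Daha := RingQuot.mkAlgHom DahaR DahaRel (ι DahaR (4 : Fin 5))

/-- The Laurent polynomial ring `R[X^{±1}]`, the underlying space of the polynomial
representation of the double affine Hecke algebra of type `A₁`. -/
abbrev DahaPolyRep : Type := LaurentPolynomial DahaR

set_option synthInstance.maxHeartbeats 1000000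

/-! ### Triangular families of twisted operators -/

namespace DahaProof

section Triangular

variable {P I : Type*} [CommRing P] (σ : I → P →+* P) (len : I → ℕ)

/-- The `P`-span, inside all maps `P → P`, of the endomorphisms `σ j` of length `< m`. -/
def lower (m : ℕ) : Submodule P (P → P) :=
  Submodule.span P ((fun j => (σ j : P → P)) '' {j | len j < m})

/-- `L` has leading term `σ i`: after clearing a nonzero denominator `d`, it is a nonzero
multiple of `σ i` plus a combination of the `σ j` with `len j < len i`. -/
def HasLeading (i : I) (L : P → P) : Prop :=
  ∃ d a : P, d ≠ 0 ∧ a ≠ 0 ∧ (fun f => d * L f - a * σ i f) ∈ lower σ len (len i)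

variable {σ len}

lemma HasLeading.congr {i : I} {L L' : P → P} (h : HasLeading σ len i L)
    (e : ∀ f, L' f = L f) : HasLeading σ len i L' :=
  (funext e : L' = L) ▸ h

lemma lower_mono {m n : ℕ} (h : m ≤ n) : lower σ len m ≤ lower σ len n :=
  Submodule.span_mono (Set.image_mono fun _ hj => lt_of_lt_of_le hj h)

lemma comp_mem_lower {ρ : P →+* P} {γ : I → I} (hγ : ∀ j f, ρ (σ j f) = σ (γ j) f)
    (hlen : ∀ j, len (γ j) ≤ len j + 1) {m : ℕ} {v : P → P} (hv : v ∈ lower σ len m) :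
    (fun f => ρ (v f)) ∈ lower σ len (m + 1) := by
  induction hv using Submodule.span_induction with
  | mem v hv =>
    obtain ⟨j, hj, rfl⟩ := hv
    refine Submodule.subset_span ⟨γ j, ?_, ?_⟩
    · have := hlen j
      simp only [Set.mem_ofPred_eq] at hj ⊢
      omega
    · funext f
      exact (hγ j f).symm
  | zero =>
    convert (lower σ len (m + 1)).zero_mem using 1
    funext f
    simp
  | add v w _ _ hv hw =>
    convert (lower σ len (m + 1)).add_mem hv hw using 1
    funext f
    simp
  | smul c v _ hv =>
    convert (lower σ len (m + 1)).smul_mem (ρ c) hv using 1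
    funext f
    simp

variable [IsDomain P]

/-- Composing with an operator `U = (α ρ + β) / D`, where `ρ` lengthens `σ i` to `σ (γ i)`,
moves the leading term from `σ i` to `σ (γ i)`. -/
lemma HasLeading.step {ρ : P →+* P} (hρ : Function.Injective ρ) {γ : I → I}
    (hγ : ∀ j f, ρ (σ j f) = σ (γ j) f) (hlen : ∀ j, len (γ j) ≤ len j + 1)
    {U : P → P} {D α β : P} (hD : D ≠ 0) (hα : α ≠ 0)
    (hU : ∀ g, D * U g = α * ρ g + β * g) {i : I} {L : P → P}
    (hi : len (γ i) = len i + 1) (h : HasLeading σ len i L) :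
    HasLeading σ len (γ i) (fun f => U (L f)) := by
  obtain ⟨d, a, hd, ha, hv⟩ := h
  refine ⟨D * d * ρ d, α * d * ρ a, ?_, ?_, ?_⟩
  · exact mul_ne_zero (mul_ne_zero hD hd) ((map_ne_zero_iff ρ hρ).2 hd)
  · exact mul_ne_zero (mul_ne_zero hα hd) ((map_ne_zero_iff ρ hρ).2 ha)
  · rw [hi]
    have h1 := comp_mem_lower hγ hlen hv
    have h2 := lower_mono (Nat.le_succ (len i)) hv
    have h3 : (σ i : P → P) ∈ lower σ len (len i + 1) :=
      Submodule.subset_span ⟨i, Nat.lt_succ_self _, rfl⟩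
    have h4 := add_mem (add_mem (Submodule.smul_mem _ (α * d) h1)
      (Submodule.smul_mem _ (β * ρ d) h2)) (Submodule.smul_mem _ (β * ρ d * a) h3)
    convert h4 using 1
    funext f
    simp only [Pi.add_apply, Pi.smul_apply, smul_eq_mul, map_sub, map_mul, hγ]
    linear_combination d * ρ d * hU (L f)

/-- A family of operators with distinct leading terms is linearly independent over `P`.
The independence of the `σ i` themselves is Dedekind's lemma. -/
lemma eq_zero_of_hasLeading (hσ : Function.Injective σ) {L : I → P → P}
    (hL : ∀ i, HasLeading σ len i (L i)) (l : I →₀ P)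
    (hl : ∀ f, l.sum (fun i c => c * L i f) = 0) : l = 0 := by
  classical
  by_contra hne
  obtain ⟨i₀, hi₀, hmax⟩ :=
    Finset.exists_max_image l.support len (Finsupp.support_nonempty_iff.2 hne)
  choose d a hd ha hv using hL
  have hind : LinearIndependent P (fun i => (σ i : P → P)) :=
    (linearIndependent_monoidHom P P).comp (fun i => (σ i : P →* P)) fun i j hij =>
      hσ (RingHom.ext fun x => DFunLike.congr_fun hij x)
  -- `e i` is the product of all denominators except the `i`-th one.
  let e : I → P := fun i => ∏ j ∈ l.support.erase i, d j
  have he : ∀ i, e i ≠ 0 := fun i => Finset.prod_ne_zero_iff.2 fun j _ => hd j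
  have hed : ∀ i ∈ l.support, e i * d i = ∏ j ∈ l.support, d j := fun i hi =>
    Finset.prod_erase_mul _ _ hi
  have hsum : ∑ i ∈ l.support, (e i * l i * a i) • (σ i : P → P) ∈
      lower σ len (len i₀) := by
    have h1 : ∑ i ∈ l.support, (-(e i * l i)) • (fun f => d i * L i f - a i * σ i f) ∈
        lower σ len (len i₀) :=
      sum_mem fun i hi => Submodule.smul_mem _ _ (lower_mono (hmax i hi) (hv i))
    convert h1 using 1
    funext f
    simp only [Finset.sum_apply, Pi.smul_apply, smul_eq_mul]
    have h2 : ∑ i ∈ l.support, e i * l i * (d i * L i f) = 0 := by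
      have h3 : ∑ i ∈ l.support, l i * L i f = 0 := hl f
      calc _ = ∑ i ∈ l.support, (∏ j ∈ l.support, d j) * (l i * L i f) :=
            Finset.sum_congr rfl fun i hi => by rw [← hed i hi]; ring
        _ = 0 := by rw [← Finset.mul_sum, h3, mul_zero]
    rw [← sub_eq_zero, ← h2, ← Finset.sum_sub_distrib]
    exact Finset.sum_congr rfl fun i _ => by ring
  have hmem : (e i₀ * l i₀ * a i₀) • (σ i₀ : P → P) ∈
      Submodule.span P ((fun i => (σ i : P → P)) '' (Set.univ \ {i₀})) := by
    rw [← Finset.add_sum_erase _ _ hi₀] at hsum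
    refine (Submodule.add_mem_iff_left _ ?_).1 (Submodule.span_mono (Set.image_mono ?_) hsum)
    · refine sum_mem fun i hi => Submodule.smul_mem _ _ (Submodule.subset_span ⟨i, ?_, rfl⟩)
      simpa using (Finset.mem_erase.1 hi).1
    · rintro j hj
      simp only [Set.mem_ofPred_eq] at hj
      simp only [Set.mem_sdiff, Set.mem_univ, Set.mem_singleton_iff, true_and]
      rintro rfl
      exact lt_irrefl _ hj
  exact mul_ne_zero (mul_ne_zero (he i₀) (Finsupp.mem_support_iff.1 hi₀)) (ha i₀)
    (linearIndependent_iff_eq_zero_of_smul_mem_span.1 hind i₀ _ hmem)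

end Triangular

/-! ### Laurent polynomials and their twisting automorphisms -/

open LaurentPolynomial

section Laurent

variable {K A : Type*} [CommRing K] [Ring A] [Algebra K A]

/-- Evaluation of Laurent polynomials at a unit of a possibly noncommutative algebra. -/
noncomputable def evalUnit (u : Aˣ) : LaurentPolynomial K →ₐ[K] A :=
  AddMonoidAlgebra.lift K A ℤ ((Units.coeHom A).comp (zpowersHom Aˣ u))

lemma evalUnit_T (u : Aˣ) (n : ℤ) : evalUnit (K := K) u (T n) = ((u ^ n : Aˣ) : A) := by
  rw [evalUnit, T, AddMonoidAlgebra.lift_single]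
  simp

lemma laurent_algHom_ext {f g : LaurentPolynomial K →ₐ[K] A} (h : f (T 1) = g (T 1)) :
    f = g := by
  have key : ∀ f : LaurentPolynomial K →ₐ[K] A, ∃ u : Aˣ, (u : A) = f (T 1) ∧ f = evalUnit u := by
    intro f
    have h1 : (T 1 : LaurentPolynomial K) * T (-1) = 1 := by rw [← T_add]; simp
    have h2 : (T (-1) : LaurentPolynomial K) * T 1 = 1 := by rw [← T_add]; simp
    refine ⟨⟨f (T 1), f (T (-1)), by rw [← map_mul, h1, map_one],
      by rw [← map_mul, h2, map_one]⟩, rfl, ?_⟩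
    refine AddMonoidAlgebra.algHom_ext (fun m => ?_) (by ext)
    change f (T m) = evalUnit _ (T m)
    rw [evalUnit_T]
    induction m using Int.induction_on with
    | zero => simp
    | succ n ih => rw [T_add, map_mul, ih, zpow_add_one]; simp
    | pred n ih => rw [sub_eq_add_neg, T_add, map_mul, ih, ← sub_eq_add_neg, zpow_sub_one]; simp
  obtain ⟨u, hu, hf⟩ := key f
  obtain ⟨v, hv, hg⟩ := key g
  rw [hf, hg, Units.ext (hu.trans (h.trans hv.symm))]

variable (q : Kˣ)

/-- The unit `X` of the Laurent polynomial ring. -/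
noncomputable def unitX : (LaurentPolynomial K)ˣ :=
  ⟨T 1, T (-1), by rw [← T_add]; simp, by rw [← T_add]; simp⟩

/-- The automorphisms of `K[X^{±1}]` making up the infinite dihedral group generated by
`X ↦ X⁻¹` and `X ↦ q⁻¹ X⁻¹`: the index `(k, false)` is `X ↦ q ^ k X` and `(k, true)` is
`X ↦ q ^ k X⁻¹`. -/
noncomputable def sig (i : ℤ × Bool) : LaurentPolynomial K →ₐ[K] LaurentPolynomial K :=
  evalUnit (Units.map (C : K →+* LaurentPolynomial K).toMonoidHom (q ^ i.1) *
    bif i.2 then unitX⁻¹ else unitX)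

/-- The Coxeter length of `sig q i` with respect to the two reflections; left multiplication
by a reflection moves `2 k` or `2 k + 1` to a neighbour on the integer line. -/
def len (i : ℤ × Bool) : ℕ := bif i.2 then (2 * i.1 + 1).natAbs else (2 * i.1).natAbs

lemma sig_false (k : ℤ) : sig q (k, false) (T 1) = C ((q ^ k : Kˣ) : K) * T 1 := by
  rw [sig, evalUnit_T, zpow_one, Units.val_mul, Units.coe_map]; rfl

lemma sig_true (k : ℤ) : sig q (k, true) (T 1) = C ((q ^ k : Kˣ) : K) * T (-1) := by
  rw [sig, evalUnit_T, zpow_one, Units.val_mul, Units.coe_map]; rfl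

lemma sig_injective [Nontrivial K] (hq : Function.Injective fun k : ℤ => q ^ k) :
    Function.Injective fun i => (sig q i : LaurentPolynomial K →+* LaurentPolynomial K) := by
  rintro ⟨k, b⟩ ⟨m, c⟩ h
  have h1 : sig q (k, b) (T 1) = sig q (m, c) (T 1) := DFunLike.congr_fun h (T 1)
  have h2 : ∀ j : ℤ, ((q ^ j : Kˣ) : K) ≠ 0 := fun j => Units.ne_zero _
  cases b <;> cases c <;> simp only [sig_false, sig_true, ← single_eq_C_mul_T] at h1 <;>
    have h3 := congrArg (fun f : LaurentPolynomial K => f.coeff 1) h1 <;>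
    have h4 := congrArg (fun f : LaurentPolynomial K => f.coeff (-1)) h1 <;>
    simp [-single_eq_C_mul_T, AddMonoidAlgebra.coeff_single, h2] at h3 h4
  · exact Prod.ext (hq (Units.ext (by simpa using h3))) rfl
  · exact Prod.ext (hq (Units.ext (by simpa using h4))) rfl

/-- Left multiplication by the reflection `X ↦ X⁻¹` on indices. -/
def swapS (i : ℤ × Bool) : ℤ × Bool := (i.1, !i.2)

/-- Left multiplication by the reflection `X ↦ q⁻¹ X⁻¹` on indices. -/
def swapPi (i : ℤ × Bool) : ℤ × Bool := (bif i.2 then i.1 + 1 else i.1 - 1, !i.2)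

lemma len_swapS (i : ℤ × Bool) : len (swapS i) ≤ len i + 1 := by
  rcases i with ⟨k, _ | _⟩ <;> simp [len, swapS] <;> omega

lemma len_swapPi (i : ℤ × Bool) : len (swapPi i) ≤ len i + 1 := by
  rcases i with ⟨k, _ | _⟩ <;> simp [len, swapPi] <;> omega

variable {q} {s p : LaurentPolynomial K →ₐ[K] LaurentPolynomial K}

lemma map_T_neg (f : LaurentPolynomial K →ₐ[K] LaurentPolynomial K) {u : K} {v : K} (huv : u * v = 1)
    {n : ℤ} (h : f (T 1) = C u * T n) : f (T (-1)) = C v * T (-n) := by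
  have h1 : f (T 1) * f (T (-1)) = 1 := by
    rw [← map_mul, ← T_add]; simp
  have h2 : (C v * C u : LaurentPolynomial K) = 1 := by rw [← map_mul, mul_comm v, huv, map_one]
  have h3 : (T (-n) * T n : LaurentPolynomial K) = 1 := by rw [← T_add]; simp
  rw [h] at h1
  linear_combination (C v * T (-n)) * h1 - f (T (-1)) * h2 - f (T (-1)) * C v * C u * h3

lemma map_C' (f : LaurentPolynomial K →ₐ[K] LaurentPolynomial K) (a : K) : f (C a) = C a :=
  f.commutes a

lemma s_inv (hs : s (T 1) = T (-1)) : s (T (-1)) = T 1 := by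
  simpa using map_T_neg s (u := 1) (v := 1) (by simp) (n := -1) (by simpa using hs)

lemma s_sig (hs : s (T 1) = T (-1)) (i : ℤ × Bool) (f : LaurentPolynomial K) :
    s (sig q i f) = sig q (swapS i) f := by
  suffices h : s.comp (sig q i) = sig q (swapS i) from DFunLike.congr_fun h f
  apply laurent_algHom_ext
  rcases i with ⟨k, _ | _⟩
  · simp [swapS, sig_false, sig_true, map_C', hs]
  · simp [swapS, sig_false, sig_true, map_C', s_inv hs]

lemma sp_T (hs : s (T 1) = T (-1)) (hp : p (T 1) = C ((q⁻¹ : Kˣ) : K) * T 1) :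
    s (p (T 1)) = C ((q⁻¹ : Kˣ) : K) * T (-1) := by
  rw [hp, map_mul, map_C', hs]

lemma sp_T_inv (hs : s (T 1) = T (-1)) (hp : p (T 1) = C ((q⁻¹ : Kˣ) : K) * T 1) :
    s (p (T (-1))) = C (q : K) * T 1 := by
  simpa using map_T_neg (s.comp p) (u := ((q⁻¹ : Kˣ) : K)) (v := q) (by simp) (sp_T hs hp)

lemma sp_sig (hs : s (T 1) = T (-1)) (hp : p (T 1) = C ((q⁻¹ : Kˣ) : K) * T 1)
    (i : ℤ × Bool) (f : LaurentPolynomial K) :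
    s (p (sig q i f)) = sig q (swapPi i) f := by
  suffices h : (s.comp p).comp (sig q i) = sig q (swapPi i) from DFunLike.congr_fun h f
  apply laurent_algHom_ext
  rcases i with ⟨k, _ | _⟩
  · simp only [AlgHom.comp_apply, swapPi, sig_false, sig_true, cond_false, map_mul, map_C',
      Bool.not_false, sp_T hs hp, zpow_sub_one, Units.val_mul]
    ring
  · simp only [AlgHom.comp_apply, swapPi, sig_false, sig_true, cond_true, map_mul, map_C',
      Bool.not_true, sp_T_inv hs hp, zpow_add_one, Units.val_mul]
    ring

lemma sig_zero (f : LaurentPolynomial K) : sig q (0, false) f = f := by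
  suffices h : sig q (0, false) = AlgHom.id K _ from DFunLike.congr_fun h f
  apply laurent_algHom_ext
  simp [sig_false]

lemma s_s (hs : s (T 1) = T (-1)) (f : LaurentPolynomial K) : s (s f) = f := by
  have h := s_sig (q := 1) hs (swapS (0, false)) f
  rw [← s_sig hs] at h
  simpa [swapS, sig_zero] using h

lemma sp_sp (hs : s (T 1) = T (-1)) (hp : p (T 1) = C ((q⁻¹ : Kˣ) : K) * T 1)
    (f : LaurentPolynomial K) : s (p (s (p f))) = f := by
  have h := sp_sig hs hp (swapPi (0, false)) f
  rw [← sp_sig hs hp] at h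
  simpa [swapPi, sig_zero] using h

end Laurent

/-! ### The Demazure–Lusztig operator -/

section Operator

variable {K : Type*} [CommRing K] {q τ : Kˣ}
  {s p : LaurentPolynomial K →ₐ[K] LaurentPolynomial K}
  {Th : Module.End K (LaurentPolynomial K)}

lemma T_mul_T_neg : (T 1 : LaurentPolynomial K) * T (-1) = 1 := by rw [← T_add]; simp

lemma T_two : (T 2 : LaurentPolynomial K) = T 1 * T 1 := by rw [← T_add]; rfl

lemma C_tau_mul : (C (τ : K) * C ((τ⁻¹ : Kˣ) : K) : LaurentPolynomial K) = 1 := by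
  rw [← map_mul]; simp

lemma s_injective (hs : s (T 1) = T (-1)) :
    Function.Injective (s : LaurentPolynomial K →+* LaurentPolynomial K) :=
  Function.LeftInverse.injective (g := s) (s_s hs)

lemma val_y_apply {t y : (Module.End K (LaurentPolynomial K))ˣ} (ht : t.val = Th)
    (hy : y.val = s.toLinearMap ∘ₗ p.toLinearMap ∘ₗ Th)
    (f : LaurentPolynomial K) : y.val f = s (p (t.val f)) := by
  rw [hy, ht]; rfl

/-- `ŝ p̂` is the operator of `T Y⁻¹`, because it is an involution. -/
lemma sp_apply {t y : (Module.End K (LaurentPolynomial K))ˣ} (hs : s (T 1) = T (-1))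
    (hp : p (T 1) = C ((q⁻¹ : Kˣ) : K) * T 1)
    (ht : t.val = Th) (hy : y.val = s.toLinearMap ∘ₗ p.toLinearMap ∘ₗ Th)
    (f : LaurentPolynomial K) : s (p f) = (t * y⁻¹).val f := by
  have h1 : f = s (p ((t * y⁻¹).val f)) := by
    rw [Units.val_mul, Module.End.mul_apply, ← val_y_apply ht hy, ← Module.End.mul_apply,
      Units.mul_inv]
    rfl
  conv_lhs => rw [h1]
  rw [sp_sp hs hp]

variable [IsDomain K]

lemma T_two_sub_one_ne_zero : (T 2 - 1 : LaurentPolynomial K) ≠ 0 := by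
  intro h
  have := congrArg (fun f : LaurentPolynomial K => f.coeff 2) h
  rw [← T_zero] at this
  simp [-T_zero] at this

/-- The equation `(X² - 1) T̂ f = τ (X² - 1) ŝ f + (τ - τ⁻¹) (ŝ f - f)` characterizing the
Demazure–Lusztig operator. -/
def IsDL (τ : Kˣ) (s : LaurentPolynomial K →ₐ[K] LaurentPolynomial K)
    (Th : Module.End K (LaurentPolynomial K)) : Prop :=
  ∀ f, (T 2 - 1) * Th f = C (τ : K) * ((T 2 - 1) * s f) +
    (C (τ : K) - C ((τ⁻¹ : Kˣ) : K)) * (s f - f)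

/-- The quadratic relation `T̂² = (τ - τ⁻¹) T̂ + 1`. Besides the equations for `T̂ f` and
`T̂ (T̂ f)`, its proof uses the image under `ŝ` of the former. -/
lemma IsDL.sq (h : IsDL τ s Th) (hs : s (T 1) = T (-1)) (f : LaurentPolynomial K) :
    Th (Th f) = (C (τ : K) - C ((τ⁻¹ : Kˣ) : K)) * Th f + f := by
  set x : LaurentPolynomial K := T 1 with hxdef
  set y : LaurentPolynomial K := T (-1) with hydef
  set t : LaurentPolynomial K := C (τ : K) with htdef
  set t' : LaurentPolynomial K := C ((τ⁻¹ : Kˣ) : K) with htdef'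
  have h1 := h f
  have h2 := h (Th f)
  have h3 := congrArg s h1
  have hz : (T 2 - 1 : LaurentPolynomial K) ≠ 0 := T_two_sub_one_ne_zero
  have hx := T_mul_T_neg (K := K)
  have ht := C_tau_mul (τ := τ)
  simp only [T_two, ← hxdef] at h1 h2 h3 hz
  simp only [map_mul, map_add, map_sub, map_one, map_C', s_s hs, hs] at h2 h3
  refine mul_left_cancel₀ hz (mul_left_cancel₀ hz ?_)
  linear_combination (x * x - 1) * h2 - (t * (x * x - 1) + (t - t')) * x ^ 2 * h3
    + (t * (x * x - 1) + (t - t')) * (x * y + 1) * (s (Th f) - t * f) * hx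
    - (t - t') * x ^ 2 * h1 + (x * x - 1) ^ 2 * f * ht

lemma IsDL.TXT (h : IsDL τ s Th) (hs : s (T 1) = T (-1)) (f : LaurentPolynomial K) :
    Th (T 1 * Th f) = T (-1) * f := by
  set x : LaurentPolynomial K := T 1 with hxdef
  set y : LaurentPolynomial K := T (-1) with hydef
  set t : LaurentPolynomial K := C (τ : K) with htdef
  set t' : LaurentPolynomial K := C ((τ⁻¹ : Kˣ) : K) with htdef'
  have h1 := h f
  have h2 := h (T 1 * Th f)
  have h3 := congrArg s h1
  have hz : (T 2 - 1 : LaurentPolynomial K) ≠ 0 := T_two_sub_one_ne_zero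
  have hx := T_mul_T_neg (K := K)
  have ht := C_tau_mul (τ := τ)
  simp only [T_two, ← hxdef] at h1 h2 h3 hz
  simp only [map_mul, map_add, map_sub, map_one, map_C', s_s hs, hs] at h2 h3
  refine mul_left_cancel₀ hz (mul_left_cancel₀ hz ?_)
  linear_combination (x * x - 1) * h2 - (t * (x * x - 1) + (t - t')) * y * x ^ 2 * h3
    + (t * (x * x - 1) + (t - t')) * (x * y + 1) * y * (s (Th f) - t * f) * hx
    - (t - t') * x * h1 + (x * x - 1) ^ 2 * y * f * ht
    + ((t * (x * x - 1) + (t - t')) * (t - t') * x * s f - (t - t') ^ 2 * x * f) * hx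

/-- The coefficient of `ŝ` in both `(X² - 1) T̂` and `(X² - 1) T̂⁻¹` is nonzero. -/
lemma IsDL.lead_ne_zero : (C (τ : K) * T 2 - C ((τ⁻¹ : Kˣ) : K) : LaurentPolynomial K) ≠ 0 := by
  intro h
  have := congrArg (fun f : LaurentPolynomial K => f.coeff 2) h
  rw [← single_eq_C_mul_T] at this
  simp [-single_eq_C_mul_T] at this

/-- The element `Y ^ k` (index `(k, false)`) or `T Y ^ k` (index `(k, true)`); together with the
powers of `X` on the left these span the double affine Hecke algebra. -/
def word {G : Type*} [Group G] (t y : G) (i : ℤ × Bool) : G :=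
  bif i.2 then t * y ^ i.1 else y ^ i.1

section Words

variable {t y : (Module.End K (LaurentPolynomial K))ˣ}

/-- The operator of `word t y i` has the automorphism with the same index as leading term. -/
def WordLeads (q : Kˣ) (t y : (Module.End K (LaurentPolynomial K))ˣ) (i : ℤ × Bool) : Prop :=
  HasLeading (fun j => (sig q j : LaurentPolynomial K →+* LaurentPolynomial K)) len i
    (fun f => (word t y i).val f)

lemma val_inv_apply (h : IsDL τ s Th) (hs : s (T 1) = T (-1)) (ht : t.val = Th)
    (f : LaurentPolynomial K) :
    (t⁻¹).val f = Th f - (C (τ : K) - C ((τ⁻¹ : Kˣ) : K)) * f := by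
  have h1 : t.val (Th f - (C (τ : K) - C ((τ⁻¹ : Kˣ) : K)) * f) = f := by
    rw [ht, map_sub, h.sq hs, ← map_sub, ← smul_eq_C_mul, ← smul_eq_C_mul, map_smul]
    abel
  calc (t⁻¹).val f = (t⁻¹).val (t.val (Th f - (C (τ : K) - C ((τ⁻¹ : Kˣ) : K)) * f)) := by rw [h1]
    _ = _ := by rw [← Module.End.mul_apply, Units.inv_mul]; rfl

lemma wordLeads_zero : WordLeads q t y (0, false) := by
  refine ⟨1, 1, one_ne_zero, one_ne_zero, ?_⟩
  convert Submodule.zero_mem _ using 1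
  funext f
  simp [word, sig_zero]

/-- For `0 ≤ k`, multiplying `Y ^ k` by `T` increases the length by one. -/
lemma wordLeads_T (h : IsDL τ s Th) (hs : s (T 1) = T (-1)) (ht : t.val = Th) {k : ℤ}
    (hk : 0 ≤ k) (hL : WordLeads q t y (k, false)) : WordLeads q t y (k, true) := by
  have := HasLeading.step (γ := swapS) (s_injective hs) (s_sig hs) len_swapS (U := Th)
      T_two_sub_one_ne_zero (IsDL.lead_ne_zero (τ := τ))
      (β := -(C (τ : K) - C ((τ⁻¹ : Kˣ) : K)))
      (fun g => by rw [h g]; simp only [RingHom.coe_coe]; ring)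
      (by simp [len, swapS]; omega) hL
  refine HasLeading.congr this fun f => ?_
  simp [word, ht]

/-- For `k < 0`, `Y ^ k` is longer than `T Y ^ k`: it is obtained from the latter by
multiplication by `T⁻¹`. -/
lemma wordLeads_T_inv (h : IsDL τ s Th) (hs : s (T 1) = T (-1)) (ht : t.val = Th) {k : ℤ}
    (hk : k < 0) (hL : WordLeads q t y (k, true)) : WordLeads q t y (k, false) := by
  have := HasLeading.step (γ := swapS) (s_injective hs) (s_sig hs) len_swapS (U := (t⁻¹).val)
      T_two_sub_one_ne_zero (IsDL.lead_ne_zero (τ := τ))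
      (β := -(C (τ : K) - C ((τ⁻¹ : Kˣ) : K)) * T 2)
      (fun g => by
        rw [val_inv_apply h hs ht, mul_sub, h g]; simp only [RingHom.coe_coe]; ring)
      (by simp [len, swapS]; omega) hL
  refine HasLeading.congr this fun f => ?_
  rw [← Module.End.mul_apply, ← Units.val_mul]
  simp [word]

/-- Multiplication by `π = Y T⁻¹ = T Y⁻¹` acts on words as `swapPi` does on indices. -/
lemma wordLeads_Pi (hs : s (T 1) = T (-1)) (hp : p (T 1) = C ((q⁻¹ : Kˣ) : K) * T 1)
    (ht : t.val = Th) (hy : y.val = s.toLinearMap ∘ₗ p.toLinearMap ∘ₗ Th) {i j : ℤ × Bool}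
    (hj : swapPi i = j) (hi : len j = len i + 1) (hL : WordLeads q t y i) :
    WordLeads q t y j := by
  subst hj
  have := HasLeading.step (ρ := (s.comp p : LaurentPolynomial K →+* LaurentPolynomial K))
    (γ := swapPi) (Function.LeftInverse.injective (g := s.comp p) (sp_sp hs hp))
    (sp_sig hs hp) len_swapPi (U := fun f => s (p f)) (D := 1) (α := 1) (β := 0)
    one_ne_zero one_ne_zero (fun g => by simp) hi hL
  refine HasLeading.congr this fun f => ?_
  rcases i with ⟨k, _ | _⟩
  · rw [sp_apply hs hp ht hy, ← Module.End.mul_apply, ← Units.val_mul]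
    congr 2
    simp only [word, swapPi, cond_false, Bool.not_false, cond_true]
    group
  · have h1 : (word t y (k, true)).val f = t.val ((y ^ k).val f) := rfl
    rw [h1, ← val_y_apply ht hy, ← Module.End.mul_apply, ← Units.val_mul]
    congr 2
    simp only [word, swapPi, cond_false, Bool.not_true, cond_true]
    group

/-- Every word is reached from `1` by a length-increasing sequence of multiplications: by `T` and
`π` alternately for nonnegative powers of `Y`, by `π` and `T⁻¹` alternately for negative ones. -/
lemma wordLeads (h : IsDL τ s Th) (hs : s (T 1) = T (-1))
    (hp : p (T 1) = C ((q⁻¹ : Kˣ) : K) * T 1) (ht : t.val = Th)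
    (hy : y.val = s.toLinearMap ∘ₗ p.toLinearMap ∘ₗ Th) (i : ℤ × Bool) : WordLeads q t y i := by
  have pos : ∀ n : ℕ, WordLeads q t y ((n : ℤ), false) := by
    intro n
    induction n with
    | zero => exact wordLeads_zero
    | succ n ih =>
      exact wordLeads_Pi hs hp ht hy (by simp [swapPi]) (by simp [len]; omega)
        (wordLeads_T h hs ht (by omega) ih)
  have neg : ∀ n : ℕ, WordLeads q t y (-(n : ℤ) - 1, true) ∧
      WordLeads q t y (-(n : ℤ) - 1, false) := by
    intro n
    have key : ∀ m : ℤ, m < 0 → WordLeads q t y (m + 1, false) →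
        WordLeads q t y (m, true) ∧ WordLeads q t y (m, false) := by
      intro m hm hL
      have h1 : WordLeads q t y (m, true) :=
        wordLeads_Pi hs hp ht hy (by simp [swapPi]) (by simp [len]; omega) hL
      exact ⟨h1, wordLeads_T_inv h hs ht hm h1⟩
    induction n with
    | zero => exact key _ (by simp) (by simpa using wordLeads_zero)
    | succ n ih =>
      refine key _ (by omega) ?_
      convert ih.2 using 2
      push_cast
      ring
  rcases i with ⟨k, b⟩
  rcases lt_or_ge k 0 with hk | hk
  · obtain ⟨n, rfl⟩ : ∃ n : ℕ, k = -(n : ℤ) - 1 := ⟨(-k - 1).toNat, by omega⟩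
    cases b
    · exact (neg n).2
    · exact (neg n).1
  · obtain ⟨n, rfl⟩ : ∃ n : ℕ, k = n := ⟨k.toNat, by omega⟩
    cases b
    · exact pos n
    · exact wordLeads_T h hs ht hk (pos n)

end Words

end Operator

/-! ### A spanning set of the algebra -/

section Span

variable {K H : Type*} [CommRing K] [Ring H] [Algebra K H] {q : Kˣ} {c : K} {x y t : Hˣ}

/-- The `K`-linear map `(fᵢ) ↦ ∑ᵢ fᵢ(X) wᵢ`, with `wᵢ` the elements `word t y i`. -/
noncomputable def combine (x y t : Hˣ) : (ℤ × Bool →₀ LaurentPolynomial K) →ₗ[K] H :=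
  Finsupp.lsum K fun i => LinearMap.mulRight K (word t y i).val ∘ₗ (evalUnit x).toLinearMap

lemma combine_single (i : ℤ × Bool) (f : LaurentPolynomial K) :
    combine x y t (Finsupp.single i f) = evalUnit x f * (word t y i).val := by
  simp [combine]

lemma mem_range_combine (i : ℤ × Bool) (f : LaurentPolynomial K) :
    evalUnit x f * (word t y i).val ∈ LinearMap.range (combine (K := K) x y t) :=
  ⟨_, combine_single i f⟩

lemma word_mem_range (i : ℤ × Bool) :
    (word t y i).val ∈ LinearMap.range (combine (K := K) x y t) := by
  simpa using mem_range_combine (K := K) (x := x) (y := y) (t := t) i 1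

/-- A submodule containing all `X ^ n wᵢ` contains the span. -/
lemma range_induction {M : Submodule K H}
    (h : ∀ (n : ℤ) i, (x ^ n).val * (word t y i).val ∈ M) :
    LinearMap.range (combine (K := K) x y t) ≤ M := by
  rintro _ ⟨l, rfl⟩
  induction l using Finsupp.induction_linear with
  | zero => simp
  | add f g hf hg => rw [map_add]; exact M.add_mem hf hg
  | single i f =>
    rw [combine_single]
    induction f using LaurentPolynomial.induction_on' with
    | add f g hf hg => rw [map_add, add_mul]; exact M.add_mem hf hg
    | C_mul_T n a =>
      rw [← smul_eq_C_mul, map_smul, evalUnit_T, smul_mul_assoc]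
      exact M.smul_mem a (h n i)

lemma evalUnit_mul_mem (g : LaurentPolynomial K) {v : H}
    (hv : v ∈ LinearMap.range (combine (K := K) x y t)) :
    evalUnit x g * v ∈ LinearMap.range (combine (K := K) x y t) := by
  refine range_induction (M := Submodule.comap (LinearMap.mulLeft K (evalUnit x g))
    (LinearMap.range (combine (K := K) x y t))) ?_ hv
  intro n i
  rw [Submodule.mem_comap, LinearMap.mulLeft_apply, ← evalUnit_T (K := K), ← mul_assoc, ← map_mul]
  exact mem_range_combine i _

lemma x_mul_mem {v : H} (hv : v ∈ LinearMap.range (combine (K := K) x y t)) :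
    x.val * v ∈ LinearMap.range (combine (K := K) x y t) := by
  simpa [evalUnit_T] using evalUnit_mul_mem (T 1) hv

lemma x_inv_mul_mem {v : H} (hv : v ∈ LinearMap.range (combine (K := K) x y t)) :
    (x⁻¹).val * v ∈ LinearMap.range (combine (K := K) x y t) := by
  simpa [evalUnit_T] using evalUnit_mul_mem (T (-1)) hv

/-- The span is stable under left multiplication by `b` as soon as `b` can be moved past the
elements `word t y i` and past `X^{±1}`. -/
lemma mul_mem_range {b : H}
    (hw : ∀ i, b * (word t y i).val ∈ LinearMap.range (combine (K := K) x y t))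
    (hx : ∀ v ∈ LinearMap.range (combine (K := K) x y t),
      b * v ∈ LinearMap.range (combine (K := K) x y t) →
      b * (x.val * v) ∈ LinearMap.range (combine (K := K) x y t))
    (hx' : ∀ v ∈ LinearMap.range (combine (K := K) x y t),
      b * v ∈ LinearMap.range (combine (K := K) x y t) →
      b * ((x⁻¹).val * v) ∈ LinearMap.range (combine (K := K) x y t))
    {v : H} (hv : v ∈ LinearMap.range (combine (K := K) x y t)) :
    b * v ∈ LinearMap.range (combine (K := K) x y t) := by
  refine range_induction (M := Submodule.comap (LinearMap.mulLeft K b)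
    (LinearMap.range (combine (K := K) x y t))) ?_ hv
  intro n i
  rw [Submodule.mem_comap, LinearMap.mulLeft_apply]
  have hmem : ∀ n : ℤ, (x ^ n).val * (word t y i).val ∈
      LinearMap.range (combine (K := K) x y t) := fun n => by
    rw [← evalUnit_T (K := K)]; exact mem_range_combine i _
  induction n using Int.induction_on with
  | zero => simpa using hw i
  | succ n ih =>
    have := hx _ (hmem n) ih
    rwa [← mul_assoc x.val, ← Units.val_mul, ← zpow_one_add, add_comm] at this
  | pred n ih =>
    have := hx' _ (hmem _) ih
    have e : x⁻¹ * x ^ (-(n : ℤ)) = x ^ (-(n : ℤ) - 1) := by group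
    rwa [← mul_assoc (x⁻¹).val, ← Units.val_mul, e] at this

/-- The defining relations of the algebra, phrased for units of an arbitrary algebra;
`c` stands for `τ - τ⁻¹`. -/
structure Rels (q : Kˣ) (c : K) (x y t : Hˣ) : Prop where
  inv : (t⁻¹).val = t.val - algebraMap K H c
  TXT : t * x * t = x⁻¹
  TYT : t * y⁻¹ * t = y
  cross : y⁻¹ * x⁻¹ * y * x * t * t = Units.map (algebraMap K H).toMonoidHom q

namespace Rels

lemma t_x (h : Rels q c x y t) (v : H) :
    t.val * (x.val * v) = (x⁻¹).val * (t.val * v) - c • ((x⁻¹).val * v) := by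
  have h1 : t * x = x⁻¹ * t⁻¹ := eq_mul_inv_of_mul_eq h.TXT
  rw [← mul_assoc, ← Units.val_mul, h1, Units.val_mul, h.inv, mul_sub, sub_mul,
    ← Algebra.commutes, ← Algebra.smul_def, mul_assoc, smul_mul_assoc]

lemma t_x_inv (h : Rels q c x y t) (v : H) :
    t.val * ((x⁻¹).val * v) = x.val * (t.val * v) + c • ((x⁻¹).val * v) := by
  have h1 : x * t = t⁻¹ * x⁻¹ := eq_inv_mul_of_mul_eq (by rw [← mul_assoc]; exact h.TXT)
  have h2 : x.val * t.val = t.val * (x⁻¹).val - c • (x⁻¹).val := by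
    rw [← Units.val_mul, h1, Units.val_mul, h.inv, sub_mul, Algebra.smul_def]
  rw [← mul_assoc x.val, h2, sub_mul, smul_mul_assoc, mul_assoc]
  abel

/-- The element `π = Y T⁻¹` satisfies `π X⁻¹ = q X π`. -/
lemma pi_x_inv (h : Rels q c x y t) (v : H) :
    (y * t⁻¹).val * ((x⁻¹).val * v) = (q : K) • (x.val * ((y * t⁻¹).val * v)) := by
  have h1 : x * t = t⁻¹ * x⁻¹ := eq_inv_mul_of_mul_eq (by rw [← mul_assoc]; exact h.TXT)
  have h2 : y * t⁻¹ * x⁻¹ = x * y * Units.map (algebraMap K H).toMonoidHom q * t⁻¹ := by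
    rw [← h.cross, mul_assoc y, ← h1]
    group
  rw [← mul_assoc, ← Units.val_mul, h2]
  simp only [Units.val_mul, Units.coe_map, RingHom.toMonoidHom_eq_coe, MonoidHom.coe_coe]
  rw [mul_assoc x.val, ← Algebra.commutes, Algebra.smul_def, ← mul_assoc, ← mul_assoc,
    ← mul_assoc, ← mul_assoc, Algebra.commutes]

lemma pi_x (h : Rels q c x y t) (v : H) :
    (y * t⁻¹).val * (x.val * v) = ((q⁻¹ : Kˣ) : K) • ((x⁻¹).val * ((y * t⁻¹).val * v)) := by
  have h1 := h.pi_x_inv (x.val * v)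
  have h2 : (x⁻¹).val * (x.val * v) = v := by simp
  rw [h2] at h1
  rw [h1, mul_smul_comm, smul_smul]
  simp

lemma pi_eq (h : Rels q c x y t) : y * t⁻¹ = t * y⁻¹ :=
  (mul_inv_eq_iff_eq_mul).2 h.TYT.symm

lemma t_mul_mem (h : Rels q c x y t) {v : H}
    (hv : v ∈ LinearMap.range (combine (K := K) x y t)) :
    t.val * v ∈ LinearMap.range (combine (K := K) x y t) := by
  refine mul_mem_range ?_ ?_ ?_ hv
  · rintro ⟨k, _ | _⟩
    · exact word_mem_range (k, true)
    · have h1 : t.val * (word t y (k, true)).val =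
          (word t y (k, false)).val + c • (word t y (k, true)).val := by
        have h2 : t.val * t.val = 1 + c • t.val := by
          have h3 : t.val * (t⁻¹).val = 1 := by simp
          rw [h.inv, mul_sub, sub_eq_iff_eq_add] at h3
          rw [h3, Algebra.smul_def, Algebra.commutes]
        simp only [word, cond_true, cond_false, Units.val_mul]
        rw [← mul_assoc, h2, add_mul, one_mul, smul_mul_assoc]
      rw [h1]
      exact add_mem (word_mem_range _) (Submodule.smul_mem _ _ (word_mem_range _))
  · intro v hv hb
    rw [h.t_x]
    exact sub_mem (x_inv_mul_mem hb) (Submodule.smul_mem _ _ (x_inv_mul_mem hv))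
  · intro v hv hb
    rw [h.t_x_inv]
    exact add_mem (x_mul_mem hb) (Submodule.smul_mem _ _ (x_inv_mul_mem hv))

lemma t_inv_mul_mem (h : Rels q c x y t) {v : H}
    (hv : v ∈ LinearMap.range (combine (K := K) x y t)) :
    (t⁻¹).val * v ∈ LinearMap.range (combine (K := K) x y t) := by
  rw [h.inv, sub_mul, ← Algebra.smul_def]
  exact sub_mem (h.t_mul_mem hv) (Submodule.smul_mem _ _ hv)

lemma pi_mul_mem (h : Rels q c x y t) {v : H}
    (hv : v ∈ LinearMap.range (combine (K := K) x y t)) :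
    (y * t⁻¹).val * v ∈ LinearMap.range (combine (K := K) x y t) := by
  refine mul_mem_range ?_ ?_ ?_ hv
  · intro i
    have h1 : y * t⁻¹ * word t y i = word t y (swapPi i) := by
      rcases i with ⟨k, _ | _⟩
      · rw [h.pi_eq]
        simp only [word, swapPi, cond_true, cond_false, Bool.not_false]
        group
      · simp only [word, swapPi, cond_true, cond_false, Bool.not_true]
        group
    rw [← Units.val_mul, h1]
    exact word_mem_range _
  · intro v hv hb
    rw [h.pi_x]
    exact Submodule.smul_mem _ _ (x_inv_mul_mem hb)
  · intro v hv hb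
    rw [h.pi_x_inv]
    exact Submodule.smul_mem _ _ (x_mul_mem hb)

lemma y_mul_mem (h : Rels q c x y t) {v : H}
    (hv : v ∈ LinearMap.range (combine (K := K) x y t)) :
    y.val * v ∈ LinearMap.range (combine (K := K) x y t) := by
  have := h.pi_mul_mem (h.t_mul_mem hv)
  rwa [← mul_assoc, ← Units.val_mul, inv_mul_cancel_right] at this

lemma y_inv_mul_mem (h : Rels q c x y t) {v : H}
    (hv : v ∈ LinearMap.range (combine (K := K) x y t)) :
    (y⁻¹).val * v ∈ LinearMap.range (combine (K := K) x y t) := by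
  have := h.t_inv_mul_mem (h.pi_mul_mem hv)
  rwa [h.pi_eq, ← mul_assoc, ← Units.val_mul, inv_mul_cancel_left] at this

end Rels

end Span

/-! ### Faithfulness -/

section Faithful

variable {K H : Type*} [CommRing K] [IsDomain K] [Ring H] [Algebra K H] {q τ : Kˣ} {x y t : Hˣ}
  {s p : LaurentPolynomial K →ₐ[K] LaurentPolynomial K}
  {Th : Module.End K (LaurentPolynomial K)}

/-- If the elements `X ^ n wᵢ` span the algebra and `q` is not a root of unity, then the polynomial
representation is faithful. -/
lemma faithful (hq : Function.Injective fun k : ℤ => q ^ k) (h : IsDL τ s Th)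
    (hs : s (T 1) = T (-1)) (hp : p (T 1) = C ((q⁻¹ : Kˣ) : K) * T 1)
    (hspan : ∀ v : H, v ∈ LinearMap.range (combine (K := K) x y t))
    (Φ : H →ₐ[K] Module.End K (LaurentPolynomial K))
    (hX : Φ x.val = LinearMap.mulLeft K (T 1)) (hT : Φ t.val = Th)
    (hY : Φ y.val = s.toLinearMap ∘ₗ p.toLinearMap ∘ₗ Th) : Function.Injective Φ := by
  rw [injective_iff_map_eq_zero]
  intro v hv
  obtain ⟨l, rfl⟩ := hspan v
  have hcomp : Φ.comp (evalUnit x) = Algebra.lmul K (LaurentPolynomial K) := by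
    apply laurent_algHom_ext
    rw [AlgHom.comp_apply, evalUnit_T, zpow_one, hX]
    rfl
  have hword : ∀ i, Φ (word t y i).val =
      (word (Units.map (Φ : H →* Module.End K (LaurentPolynomial K)) t)
        (Units.map (Φ : H →* Module.End K (LaurentPolynomial K)) y) i).val := by
    rintro ⟨k, _ | _⟩
    · simp only [word, cond_false, ← map_zpow]; rfl
    · simp only [word, cond_true, ← map_zpow, ← map_mul]; rfl
  have hl : l = 0 := by
    refine eq_zero_of_hasLeading (sig_injective q hq) (fun i => wordLeads h hs hp
      (t := Units.map (Φ : H →* Module.End K (LaurentPolynomial K)) t)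
      (y := Units.map (Φ : H →* Module.End K (LaurentPolynomial K)) y) hT hY i) l fun f => ?_
    have h1 : Φ (combine x y t l) f = 0 := by rw [hv]; rfl
    rw [combine, Finsupp.lsum_apply, map_finsuppSum, Finsupp.sum, LinearMap.sum_apply] at h1
    rw [← h1]
    refine Finset.sum_congr rfl fun i _ => ?_
    have h2 : Φ (evalUnit x (l i)) = LinearMap.mulLeft K (l i) := DFunLike.congr_fun hcomp (l i)
    have h3 : (LinearMap.mulRight K (word t y i).val ∘ₗ (evalUnit x).toLinearMap) (l i) =
        evalUnit x (l i) * (word t y i).val := rfl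
    rw [h3, map_mul, h2, Module.End.mul_apply, LinearMap.mulLeft_apply, hword]
  rw [hl, map_zero]

end Faithful

/-! ### The algebra over `ℂ[τ^{±1}, q^{±1}]` -/

/-- `τ` as a unit of the coefficient ring. -/
noncomputable def tauU : DahaRˣ :=
  ⟨dahaTau, dahaTauInv, by rw [dahaTau, dahaTauInv, ← map_mul, ← T_add]; simp,
    by rw [dahaTau, dahaTauInv, ← map_mul, ← T_add]; simp⟩

/-- `q` as a unit of the coefficient ring. -/
noncomputable def qU : DahaRˣ :=
  ⟨dahaQ, dahaQInv, by rw [dahaQ, dahaQInv, ← T_add]; simp,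
    by rw [dahaQ, dahaQInv, ← T_add]; simp⟩

lemma qU_zpow_injective : Function.Injective fun k : ℤ => qU ^ k := by
  have h : ∀ k : ℤ, ((qU ^ k : DahaRˣ) : DahaR) = T k := by
    intro k
    have h1 : (qU : DahaRˣ) = unitX := Units.ext rfl
    rw [h1, ← evalUnit_T (K := LaurentPolynomial ℂ)]
    have h2 : evalUnit (K := LaurentPolynomial ℂ) (unitX (K := LaurentPolynomial ℂ)) =
        AlgHom.id _ _ := by
      apply laurent_algHom_ext
      rw [evalUnit_T, zpow_one]
      rfl
    rw [h2]
    rfl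
  intro k m hkm
  have h1 : (T k : DahaR) = T m := by rw [← h k, ← h m]; exact congrArg Units.val hkm
  have h2 := congrArg (fun f : DahaR => f.coeff k) h1
  by_contra hne
  simp [Ne.symm hne] at h2

/-- The ring structure of the double affine Hecke algebra; instance search does not unify the
coefficient semiring appearing in `DahaRel` with the one underlying the commutative ring. -/
noncomputable instance : Ring Daha := RingQuot.instRing DahaRel

/-- The image in the double affine Hecke algebra of the `i`-th free generator. -/
noncomputable def gen (i : Fin 5) : Daha :=
  RingQuot.mkAlgHom DahaR DahaRel (FreeAlgebra.ι DahaR i)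

/-- `X` as a unit of the double affine Hecke algebra. -/
noncomputable def xU : Dahaˣ :=
  ⟨gen 0, gen 1, by simpa [gen] using RingQuot.mkAlgHom_rel DahaR DahaRel.X_Xinv,
    by simpa [gen] using RingQuot.mkAlgHom_rel DahaR DahaRel.Xinv_X⟩

/-- `Y` as a unit of the double affine Hecke algebra. -/
noncomputable def yU : Dahaˣ :=
  ⟨gen 2, gen 3, by simpa [gen] using RingQuot.mkAlgHom_rel DahaR DahaRel.Y_Yinv,
    by simpa [gen] using RingQuot.mkAlgHom_rel DahaR DahaRel.Yinv_Y⟩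

lemma gen_hecke : (gen 4 - algebraMap DahaR Daha dahaTau) *
    (gen 4 + algebraMap DahaR Daha dahaTauInv) = 0 := by
  simpa [gen] using RingQuot.mkAlgHom_rel DahaR DahaRel.hecke

lemma algebraMap_tau_mul {A : Type*} [Ring A] [Algebra DahaR A] :
    algebraMap DahaR A dahaTau * algebraMap DahaR A dahaTauInv = 1 := by
  rw [← map_mul, show dahaTau * dahaTauInv = 1 from tauU.mul_inv, map_one]

lemma mul_sub_eq_one {A : Type*} [Ring A] [Algebra DahaR A] {g : A}
    (h : (g - algebraMap DahaR A dahaTau) * (g + algebraMap DahaR A dahaTauInv) = 0) :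
    g * (g - algebraMap DahaR A (dahaTau - dahaTauInv)) = 1 ∧
      (g - algebraMap DahaR A (dahaTau - dahaTauInv)) * g = 1 := by
  have h1 := algebraMap_tau_mul (A := A)
  have h2 := Algebra.commutes dahaTau g
  have h3 := Algebra.commutes dahaTauInv g
  have h4 : g * g = 1 + algebraMap DahaR A dahaTau * g - algebraMap DahaR A dahaTauInv * g := by
    rw [sub_mul, mul_add, mul_add, h1, ← h3] at h
    rw [← sub_eq_zero, ← h]
    abel
  rw [map_sub]
  constructor
  · rw [mul_sub, mul_sub, ← h2, ← h3, h4]; abel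
  · rw [sub_mul, sub_mul, h4]; abel

/-- `T` as a unit of the double affine Hecke algebra. -/
noncomputable def tU : Dahaˣ :=
  ⟨gen 4, gen 4 - algebraMap DahaR Daha (dahaTau - dahaTauInv), (mul_sub_eq_one gen_hecke).1,
    (mul_sub_eq_one gen_hecke).2⟩

lemma daha_rels : Rels qU (dahaTau - dahaTauInv) xU yU tU where
  inv := rfl
  TXT := Units.ext (by
    have h := RingQuot.mkAlgHom_rel DahaR DahaRel.TXT
    rw [map_mul, map_mul] at h
    exact h)
  TYT := Units.ext (by
    have h := RingQuot.mkAlgHom_rel DahaR DahaRel.TYinvT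
    rw [map_mul, map_mul] at h
    exact h)
  cross := Units.ext (by
    have h := RingQuot.mkAlgHom_rel DahaR DahaRel.cross
    rw [map_mul, map_mul, map_mul, map_mul, map_mul, AlgHom.commutes] at h
    exact h)

/-- The elements `X ^ n Y ^ k` and `X ^ n T Y ^ k` span the double affine Hecke algebra: their span
contains `1` and is stable under left multiplication by the generators. -/
lemma daha_span (v : Daha) : v ∈ LinearMap.range (combine (K := DahaR) xU yU tU) := by
  have one_mem : (1 : Daha) ∈ LinearMap.range (combine (K := DahaR) xU yU tU) := by
    simpa [word] using word_mem_range (K := DahaR) (x := xU) (y := yU) (t := tU) (0, false)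
  have key : ∀ (a : FreeAlgebra DahaR (Fin 5)),
      ∀ v ∈ LinearMap.range (combine (K := DahaR) xU yU tU),
        RingQuot.mkAlgHom DahaR DahaRel a * v ∈ LinearMap.range (combine (K := DahaR) xU yU tU) := by
    intro a
    induction a using FreeAlgebra.induction with
    | grade0 r =>
      intro v hv
      rw [AlgHom.commutes, ← Algebra.smul_def]
      exact Submodule.smul_mem _ _ hv
    | grade1 i =>
      intro v hv
      fin_cases i
      · exact x_mul_mem hv
      · exact x_inv_mul_mem hv
      · exact daha_rels.y_mul_mem hv
      · exact daha_rels.y_inv_mul_mem hv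
      · exact daha_rels.t_mul_mem hv
    | mul a b ha hb =>
      intro v hv
      rw [map_mul, mul_assoc]
      exact ha _ (hb _ hv)
    | add a b ha hb =>
      intro v hv
      rw [map_add, add_mul]
      exact add_mem (ha _ hv) (hb _ hv)
  obtain ⟨a, rfl⟩ := RingQuot.mkAlgHom_surjective DahaR DahaRel v
  simpa using key a 1 one_mem

/-- Homomorphisms out of the double affine Hecke algebra are determined on `X`, `T`, `Y`. -/
lemma daha_hom_ext {A : Type*} [Semiring A] [Algebra DahaR A] {Φ Ψ : Daha →ₐ[DahaR] A}
    (hX : Φ Daha.X = Ψ Daha.X) (hT : Φ Daha.T = Ψ Daha.T) (hY : Φ Daha.Y = Ψ Daha.Y) :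
    Φ = Ψ := by
  have hinv : ∀ u : Dahaˣ, Φ u.val = Ψ u.val → Φ (u⁻¹).val = Ψ (u⁻¹).val := by
    intro u hu
    have : Units.map (Φ : Daha →* A) u = Units.map (Ψ : Daha →* A) u := Units.ext hu
    simpa using congrArg (fun w : Aˣ => (w⁻¹).val) this
  apply RingQuot.ringQuot_ext'
  apply FreeAlgebra.hom_ext
  funext i
  fin_cases i
  · exact hX
  · exact hinv xU hX
  · exact hY
  · exact hinv yU hY
  · exact hT

/-- The operators satisfy the defining relations; `Y⁻¹` acts as `T̂⁻¹ ŝ p̂`. -/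
lemma exists_rep {s p : DahaPolyRep →ₐ[DahaR] DahaPolyRep} {Th : Module.End DahaR DahaPolyRep}
    (h : IsDL tauU s Th) (hs : s (T 1) = T (-1))
    (hp : p (T 1) = C ((qU⁻¹ : DahaRˣ) : DahaR) * T 1) :
    ∃ Φ : Daha →ₐ[DahaR] Module.End DahaR DahaPolyRep,
      Φ Daha.X = LinearMap.mulLeft DahaR (T 1) ∧ Φ Daha.T = Th ∧
      Φ Daha.Y = s.toLinearMap ∘ₗ p.toLinearMap ∘ₗ Th := by
  have hC : (C dahaTau * C dahaTauInv : DahaPolyRep) = 1 := C_tau_mul (τ := tauU)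
  have hsq : ∀ f, Th (Th f) = (C dahaTau - C dahaTauInv) * Th f + f := h.sq hs
  have hTC : ∀ (r : DahaR) (f : DahaPolyRep), Th (C r * f) = C r * Th f := fun r f => by
    rw [← smul_eq_C_mul, map_smul, smul_eq_C_mul]
  let Ti : Module.End DahaR DahaPolyRep :=
    Th + algebraMap DahaR (Module.End DahaR DahaPolyRep) (dahaTauInv - dahaTau)
  have hTi : ∀ f, Ti f = Th f + C (dahaTauInv - dahaTau) * f := fun f => by
    rw [← smul_eq_C_mul]; rfl
  have hi1' : ∀ f, Th (Ti f) = f := fun f => by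
    rw [hTi, map_add, hsq, hTC, map_sub]; ring
  have hi2' : ∀ f, Ti (Th f) = f := fun f => by
    rw [hTi, hsq, map_sub]; ring
  let F : FreeAlgebra DahaR (Fin 5) →ₐ[DahaR] Module.End DahaR DahaPolyRep :=
    FreeAlgebra.lift DahaR ![LinearMap.mulLeft DahaR (T 1), LinearMap.mulLeft DahaR (T (-1)),
      s.toLinearMap ∘ₗ p.toLinearMap ∘ₗ Th, Ti ∘ₗ s.toLinearMap ∘ₗ p.toLinearMap, Th]
  have F0 : F (FreeAlgebra.ι DahaR 0) = LinearMap.mulLeft DahaR (T 1) :=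
    FreeAlgebra.lift_ι_apply _ _
  have F1 : F (FreeAlgebra.ι DahaR 1) = LinearMap.mulLeft DahaR (T (-1)) :=
    FreeAlgebra.lift_ι_apply _ _
  have F2 : F (FreeAlgebra.ι DahaR 2) = s.toLinearMap ∘ₗ p.toLinearMap ∘ₗ Th :=
    FreeAlgebra.lift_ι_apply _ _
  have F3 : F (FreeAlgebra.ι DahaR 3) = Ti ∘ₗ s.toLinearMap ∘ₗ p.toLinearMap :=
    FreeAlgebra.lift_ι_apply _ _
  have F4 : F (FreeAlgebra.ι DahaR 4) = Th := FreeAlgebra.lift_ι_apply _ _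
  have hxx : (T 1 : DahaPolyRep) * T (-1) = 1 := T_mul_T_neg
  have hcross : ∀ f, Ti (s (p (T (-1) * s (p (Th (T 1 * Th (Th f))))))) = dahaQ • f := by
    intro f
    rw [h.TXT hs, map_mul p, map_mul s, sp_T_inv hs hp, sp_sp hs hp, mul_assoc,
      ← mul_assoc (T 1), hxx, one_mul, ← smul_eq_C_mul, map_smul, hi2']
    rfl
  have hF : ∀ ⦃a b⦄, DahaRel a b → F a = F b := by
    intro a b hab
    cases hab with
    | X_Xinv =>
      rw [map_mul, map_one, F0, F1]
      refine LinearMap.ext fun f => ?_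
      change T 1 * (T (-1) * f) = f
      linear_combination f * hxx
    | Xinv_X =>
      rw [map_mul, map_one, F0, F1]
      refine LinearMap.ext fun f => ?_
      change T (-1) * (T 1 * f) = f
      linear_combination f * hxx
    | Y_Yinv =>
      rw [map_mul, map_one, F2, F3]
      refine LinearMap.ext fun f => ?_
      change s (p (Th (Ti (s (p f))))) = f
      rw [hi1', sp_sp hs hp]
    | Yinv_Y =>
      rw [map_mul, map_one, F2, F3]
      refine LinearMap.ext fun f => ?_
      change Ti (s (p (s (p (Th f))))) = f
      rw [sp_sp hs hp, hi2']
    | hecke =>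
      have e : FreeAlgebra.ι DahaR (4 : Fin 5) - algebraMap DahaR _ dahaTau =
          FreeAlgebra.ι DahaR (4 : Fin 5) + algebraMap DahaR _ (-dahaTau) := by
        rw [sub_eq_iff_eq_add, add_assoc, ← map_add, neg_add_cancel, map_zero, add_zero]
      rw [e, map_mul, map_add, map_add, F4, AlgHom.commutes,
        AlgHom.commutes, map_zero]
      refine LinearMap.ext fun f => ?_
      change Th (Th f + dahaTauInv • f) + (-dahaTau) • (Th f + dahaTauInv • f) = 0
      rw [smul_eq_C_mul, smul_eq_C_mul, map_add, hsq, hTC, map_neg]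
      linear_combination (-f) * hC
    | TXT =>
      rw [map_mul, map_mul, F4, F0, F1]
      refine LinearMap.ext fun f => ?_
      change Th (T 1 * Th f) = T (-1) * f
      exact h.TXT hs f
    | TYinvT =>
      rw [map_mul, map_mul, F4, F2, F3]
      refine LinearMap.ext fun f => ?_
      change Th (Ti (s (p (Th f)))) = s (p (Th f))
      rw [hi1']
    | cross =>
      rw [map_mul, map_mul, map_mul, map_mul, map_mul, F0, F1, F2, F3, F4, AlgHom.commutes]
      refine LinearMap.ext fun f => ?_
      exact hcross f
  refine ⟨RingQuot.liftAlgHom DahaR ⟨F, hF⟩, ?_, ?_, ?_⟩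
  · exact (RingQuot.liftAlgHom_mkAlgHom_apply DahaR F hF _).trans F0
  · exact (RingQuot.liftAlgHom_mkAlgHom_apply DahaR F hF _).trans F4
  · exact (RingQuot.liftAlgHom_mkAlgHom_apply DahaR F hF _).trans F2

end DahaProof

/-- The faithful polynomial representation of the type `A₁` double affine Hecke
algebra: given the involution `ŝ : X ↦ X⁻¹`, the endomorphism `p̂ : X ↦ q⁻¹ X` and
the Demazure–Lusztig operator `T̂ f = τ ŝ(f) + (τ - τ⁻¹)(ŝ(f) - f)/(X² - 1)` on
`R[X^{±1}]`, there is a unique algebra homomorphism `Φ : H^{ell} → End_R(R[X^{±1}])`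
with `Φ(X) = (mult. by X)`, `Φ(T) = T̂`, `Φ(Y) = ŝ ∘ p̂ ∘ T̂`, and `Φ` is injective. -/
theorem daha_polynomial_representation
    (sHat pHat : DahaPolyRep →ₐ[DahaR] DahaPolyRep)
    (hs : sHat (LaurentPolynomial.T 1) = LaurentPolynomial.T (-1))
    (hp : pHat (LaurentPolynomial.T 1) =
      LaurentPolynomial.C dahaQInv * LaurentPolynomial.T 1)
    (THat : Module.End DahaR DahaPolyRep)
    (hT : ∀ f : DahaPolyRep,
      (LaurentPolynomial.T 2 - 1) * THat f =
        dahaTau • ((LaurentPolynomial.T 2 - 1) * sHat f) +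
          (dahaTau - dahaTauInv) • (sHat f - f)) :
    (∃! Φ : Daha →ₐ[DahaR] Module.End DahaR DahaPolyRep,
      Φ Daha.X = LinearMap.mulLeft DahaR (LaurentPolynomial.T 1) ∧
      Φ Daha.T = THat ∧
      Φ Daha.Y = sHat.toLinearMap ∘ₗ pHat.toLinearMap ∘ₗ THat) ∧
    ∀ Φ : Daha →ₐ[DahaR] Module.End DahaR DahaPolyRep,
      (Φ Daha.X = LinearMap.mulLeft DahaR (LaurentPolynomial.T 1) ∧
        Φ Daha.T = THat ∧
        Φ Daha.Y = sHat.toLinearMap ∘ₗ pHat.toLinearMap ∘ₗ THat) →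
      Function.Injective Φ := by
  have hDL : DahaProof.IsDL DahaProof.tauU sHat THat := by
    intro f
    rw [hT f, LaurentPolynomial.smul_eq_C_mul, LaurentPolynomial.smul_eq_C_mul, map_sub]
    rfl
  obtain ⟨Φ, hΦ⟩ := DahaProof.exists_rep hDL hs hp
  refine ⟨⟨Φ, hΦ, fun Ψ hΨ => ?_⟩, fun Ψ hΨ => ?_⟩
  · exact DahaProof.daha_hom_ext (hΨ.1.trans hΦ.1.symm) (hΨ.2.1.trans hΦ.2.1.symm)
      (hΨ.2.2.trans hΦ.2.2.symm)
  · exact DahaProof.faithful DahaProof.qU_zpow_injective hDL hs hp DahaProof.daha_span Ψ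
      hΨ.1 hΨ.2.1 hΨ.2.2
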